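/- arXiv:1010.1225 — 9 statements merged into one kernel-verified Lean document; each statement's English description precedes it below -/
import Mathlib

section
/- Let L be a completely distributive complete lattice with an order-reversing involution, X a set, and T : L^X → L any map. Then T is an L-fuzzy topology on X if and only if, for every coprime element a ∈ M(L), the level family T_[a] = {A ∈ L^X | T(A) ≥ a} is an L-topology on X. -/
/-!
Each of the four axioms of an `L`-fuzzy topology is an inequality between elements of `L`, and it
holds as soon as every coprime element below the left-hand side lies below the right-hand side.
Tested on coprimes, the axioms become those of an `L`-topology for the level families.

So everything rests on the coprimes separating the elements of `L`. By complete distributivity,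
every `x` is the supremum of the elements `wayBelow` it, and `wayBelow` interpolates. If `¬ x ≤ y`,
interpolation gives a sequence `x ≥ s 0 ≥ s 1 ≥ ⋯` with `s (n + 1)` way below `s n` and no `s n`
below `y`. The filter `F` generated by this sequence is completely prime (a supremum lies in `F`
only if one of its members does), so `sSup Fᶜ` is a prime element above `y` and not above `x`.
The involution turns such primes into coprimes.
-/

/-!
Common definitions: completely distributive complete lattice `L` with an
order-reversing involution `c`, `L`-subsets `X → L`, the wayBelow relation `≪`,
coprime/prime elements, `L`-(fuzzy) topologies, closure/interior, (Semi-)Preopen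
subsets, the `L`-fuzzy Preopen and Semi-Preopen operators, and the various
compactness / cover / shading / remote-family notions.
-/

variable {L : Type*} [CompletelyDistribLattice L] {X : Type*}

/-- `a ≪ b`: for every subset `D ⊆ L` with `b ≤ sSup D` there is `d ∈ D` with `a ≤ d`. -/
def wayBelow (a b : L) : Prop := ∀ D : Set L, b ≤ sSup D → ∃ d ∈ D, a ≤ d

/-- coprime (non-zero) element of `L`; `M(L)` is the set of such elements. -/
def IsCoprimeElem (a : L) : Prop := a ≠ ⊥ ∧ ∀ p q : L, a ≤ p ⊔ q → a ≤ p ∨ a ≤ q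

/-- prime (non-unit) element of `L`; `P(L)` is the set of such elements. -/
def IsPrimeElem (p : L) : Prop := p ≠ ⊤ ∧ ∀ a b : L, a ⊓ b ≤ p → a ≤ p ∨ b ≤ p

/-- pointwise complement of an `L`-subset via the involution `c`. -/
def pcompl (c : L → L) (A : X → L) : X → L := fun x => c (A x)

/-- `T : L^X → L` is an `L`-fuzzy topology. -/
def IsLFuzzyTopology (T : (X → L) → L) : Prop :=
  T ⊥ = ⊤ ∧ T ⊤ = ⊤ ∧ (∀ A B : X → L, T A ⊓ T B ≤ T (A ⊓ B)) ∧
    (∀ S : Set (X → L), (⨅ A ∈ S, T A) ≤ T (sSup S))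

/-- `τ ⊆ L^X` is an `L`-topology. -/
def IsLTopology (τ : Set (X → L)) : Prop :=
  ⊥ ∈ τ ∧ ⊤ ∈ τ ∧ (∀ S : Set (X → L), S ⊆ τ → sSup S ∈ τ) ∧
    (∀ A B : X → L, A ∈ τ → B ∈ τ → A ⊓ B ∈ τ)

/-- closure in an `L`-topological space: infimum of all closed `L`-subsets above `A`. -/
def lcl (c : L → L) (τ : Set (X → L)) (A : X → L) : X → L :=
  sInf {K : X → L | pcompl c K ∈ τ ∧ A ≤ K}

/-- interior in an `L`-topological space: supremum of all open `L`-subsets below `A`. -/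
def lint (τ : Set (X → L)) (A : X → L) : X → L :=
  sSup {U : X → L | U ∈ τ ∧ U ≤ A}

/-- `A` is Preopen: `A ≤ int (cl A)`. -/
def IsPreopen (c : L → L) (τ : Set (X → L)) (A : X → L) : Prop :=
  A ≤ lint τ (lcl c τ A)

/-- `A` is Semi-Preopen: there is a Preopen `B` with `B ≤ A ≤ cl B`. -/
def IsSemiPreopen (c : L → L) (τ : Set (X → L)) (A : X → L) : Prop :=
  ∃ B : X → L, IsPreopen c τ B ∧ B ≤ A ∧ A ≤ lcl c τ B

/-- the `L`-fuzzy Preopen operator `T_p` induced by `T`. -/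
def preopenOp (c : L → L) (T : (X → L) → L) (A : X → L) : L :=
  ⨅ x : X, ⨅ lam : L, ⨅ _ : wayBelow lam (A x),
    ⨆ B : X → L, ⨆ _ : wayBelow lam (B x),
      (T B ⊓ ⨅ y : X, ⨅ mu : L, ⨅ _ : wayBelow mu (B y),
        ⨅ D : X → L, ⨅ _ : A ≤ D, ⨅ _ : ¬ mu ≤ D y, c (T (pcompl c D)))

/-- the `L`-fuzzy Semi-Preopen operator `T_sp` induced by `T`. -/
def spOp (c : L → L) (T : (X → L) → L) (A : X → L) : L :=
  ⨆ B : X → L, ⨆ _ : B ≤ A,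
    (preopenOp c T B ⊓ ⨅ x : X, ⨅ lam : L, ⨅ _ : wayBelow lam (A x),
      ⨅ D : X → L, ⨅ _ : B ≤ D, ⨅ _ : ¬ lam ≤ D x, c (T (pcompl c D)))

/-- `G` is `L`-fuzzy SP-compact in the `L`-fuzzy topological space `(X, T)`. -/
def LFuzzySPCompact (c : L → L) (T : (X → L) → L) (G : X → L) : Prop :=
  ∀ P : Set (X → L),
    (⨅ F ∈ P, spOp c T F) ⊓ (⨅ x : X, c (G x) ⊔ ⨆ F ∈ P, F x) ≤
      ⨆ Q : Finset (X → L), ⨆ _ : ↑Q ⊆ P, ⨅ x : X, c (G x) ⊔ ⨆ F ∈ Q, F x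

/-- `G` is fuzzy SP-compact in the `L`-topological space `(X, τ)`. -/
def FuzzySPCompact (c : L → L) (τ : Set (X → L)) (G : X → L) : Prop :=
  ∀ U : Set (X → L), (∀ A ∈ U, IsSemiPreopen c τ A) →
    (⨅ x : X, c (G x) ⊔ ⨆ A ∈ U, A x) ≤
      ⨆ ψ : Finset (X → L), ⨆ _ : ↑ψ ⊆ U, ⨅ x : X, c (G x) ⊔ ⨆ A ∈ ψ, A x

/-- `U` is a `Q_a`-cover of `G`. -/
def QCover (c : L → L) (a : L) (G : X → L) (U : Set (X → L)) : Prop :=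
  ∀ x : X, a ≤ c (G x) ⊔ ⨆ A ∈ U, A x

/-- `U` is a strong `β_a`-cover of `G`. -/
def StrongBetaCover (c : L → L) (a : L) (G : X → L) (U : Set (X → L)) : Prop :=
  wayBelow a (⨅ x : X, c (G x) ⊔ ⨆ A ∈ U, A x)

/-- `P` is a strong `a`-remote family of `G`. -/
def StrongRemote (a : L) (G : X → L) (P : Set (X → L)) : Prop :=
  ¬ a ≤ ⨆ x : X, G x ⊓ ⨅ B ∈ P, B x

/-- `U` is a strong `a`-shading of `G`. -/
def StrongShading (c : L → L) (a : L) (G : X → L) (U : Set (X → L)) : Prop :=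
  ¬ (⨅ x : X, c (G x) ⊔ ⨆ A ∈ U, A x) ≤ a

/-- `G` is `a`-fuzzy SP-compact in the `L`-topological space `(X, τ)`. -/
def AFuzzySPCompact (c : L → L) (τ : Set (X → L)) (a : L) (G : X → L) : Prop :=
  ∀ b : L, wayBelow b a →
    ∀ U : Set (X → L), (∀ A ∈ U, IsSemiPreopen c τ A) → QCover c a G U →
      ∃ V : Finset (X → L), ↑V ⊆ U ∧ QCover c b G ↑V

theorem wayBelow.le {a b : L} (h : wayBelow a b) : a ≤ b := by
  obtain ⟨d, hd, had⟩ := h {b} (by simp)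
  rw [Set.mem_singleton_iff] at hd
  exact hd ▸ had

theorem wayBelow.mono {a b c d : L} (h : wayBelow b c) (hab : a ≤ b) (hcd : c ≤ d) :
    wayBelow a d := fun D hD =>
  let ⟨e, he, hbe⟩ := h D (hcd.trans hD)
  ⟨e, he, hab.trans hbe⟩

/-- This is where complete distributivity enters: `x` lies below the infimum of `sSup D` over all
`D` with `x ≤ sSup D`, and distributing writes this infimum as a supremum, over choice functions,
of elements way below `x`. -/
theorem le_sSup_wayBelow (x : L) : x ≤ sSup {z : L | wayBelow z x} := by
  have h : x ≤ ⨅ D : {D : Set L // x ≤ sSup D}, ⨆ d : D.1, (d : L) :=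
    le_iInf fun D => by
      rw [← sSup_eq_iSup']
      exact D.2
  rw [iInf_iSup_eq] at h
  refine h.trans (iSup_le fun g => le_sSup fun D hD => ?_)
  exact ⟨g ⟨D, hD⟩, (g ⟨D, hD⟩).2, iInf_le (fun D => (g D : L)) ⟨D, hD⟩⟩

theorem wayBelow.interpolate {z x : L} (h : wayBelow z x) :
    ∃ w, wayBelow z w ∧ wayBelow w x := by
  have hx : x ≤ sSup {u : L | ∃ w, wayBelow u w ∧ wayBelow w x} :=
    (le_sSup_wayBelow x).trans <| sSup_le fun w hw =>
      (le_sSup_wayBelow w).trans <| sSup_le_sSup fun u hu => ⟨w, hu, hw⟩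
  obtain ⟨u, ⟨w, huw, hwx⟩, hzu⟩ := h _ hx
  exact ⟨w, huw.mono hzu le_rfl, hwx⟩

theorem exists_isPrimeElem {x y : L} (hxy : ¬ x ≤ y) :
    ∃ p : L, IsPrimeElem p ∧ y ≤ p ∧ ¬ x ≤ p := by
  obtain ⟨z, hzx, hzy⟩ : ∃ z, wayBelow z x ∧ ¬ z ≤ y := by
    by_contra! H
    exact hxy ((le_sSup_wayBelow x).trans (sSup_le H))
  choose f hzf hf using fun w : {w : L // wayBelow z w} => w.2.interpolate
  -- The sequence descends from `x` by repeated interpolation and stays above `z`.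
  let s : ℕ → {w : L // wayBelow z w} := fun n => (fun w => ⟨f w, hzf w⟩)^[n] ⟨x, hzx⟩
  have hs : ∀ n, wayBelow (s (n + 1)).1 (s n).1 := fun n => by
    simp only [s, Function.iterate_succ_apply']
    exact hf _
  have hanti : Antitone fun n => (s n).1 := antitone_nat_of_succ_le fun n => (hs n).le
  let F : Set L := {w | ∃ n, (s n).1 ≤ w}
  have hmem : ∀ w, ¬ w ≤ sSup Fᶜ → w ∈ F := fun w hw => by
    by_contra h
    exact hw (le_sSup h)
  have hm : ∀ n, ¬ (s n).1 ≤ sSup Fᶜ := fun n h => by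
    obtain ⟨d, hd, hle⟩ := hs n _ h
    exact hd ⟨n + 1, hle⟩
  refine ⟨sSup Fᶜ, ⟨fun h => hm 0 (h ▸ le_top), fun a b hab => ?_⟩, le_sSup ?_, hm 0⟩
  · by_contra! H
    obtain ⟨i, hi⟩ := hmem a H.1
    obtain ⟨j, hj⟩ := hmem b H.2
    exact hm (max i j) ((le_inf ((hanti (le_max_left i j)).trans hi)
      ((hanti (le_max_right i j)).trans hj)).trans hab)
  · rintro ⟨n, hn⟩
    exact hzy ((s n).2.le.trans hn)

/-- In the presence of an order-reversing involution, the coprime elements are the images of the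
primes, so they separate the elements of `L`. -/
theorem le_of_forall_isCoprimeElem (c : L → L) (hc_inv : ∀ a : L, c (c a) = a)
    (hc_anti : ∀ a b : L, a ≤ b → c b ≤ c a) {x y : L}
    (h : ∀ a : L, IsCoprimeElem a → a ≤ x → a ≤ y) : x ≤ y := by
  have swap : ∀ a b : L, c a ≤ b → c b ≤ a := fun a b hab => by
    simpa only [hc_inv] using hc_anti _ _ hab
  have swap' : ∀ a b : L, a ≤ c b → b ≤ c a := fun a b hab => by
    simpa only [hc_inv] using hc_anti _ _ hab
  by_contra hxy
  have hc : ¬ c y ≤ c x := fun h' => hxy (by simpa only [hc_inv] using hc_anti _ _ h')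
  obtain ⟨p, ⟨hp_top, hp⟩, hxp, hyp⟩ := exists_isPrimeElem hc
  refine hyp (swap _ _ (h (c p) ⟨fun h0 => hp_top ?_, fun a b hab => ?_⟩ (swap _ _ hxp)))
  · exact top_le_iff.1 ((swap' _ _ (h0 ▸ bot_le)).trans (swap _ _ (h0 ▸ bot_le)))
  · have hle : c a ⊓ c b ≤ p :=
      (swap' _ _ (sup_le (swap' _ _ inf_le_left) (swap' _ _ inf_le_right))).trans
        (swap _ _ hab)
    exact (hp _ _ hle).imp (swap _ _) (swap _ _)

theorem stmt0 (c : L → L) (hc_inv : ∀ a : L, c (c a) = a)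
    (hc_anti : ∀ a b : L, a ≤ b → c b ≤ c a) (T : (X → L) → L) :
    IsLFuzzyTopology T ↔
      ∀ a : L, IsCoprimeElem a → IsLTopology {A : X → L | a ≤ T A} := by
  constructor
  · rintro ⟨hbot, htop, hinf, hsup⟩ a -
    exact ⟨le_top.trans_eq hbot.symm, le_top.trans_eq htop.symm,
      fun S hS => le_trans (le_iInf₂ (f := fun A (_ : A ∈ S) => T A) fun A hA => hS hA) (hsup S),
      fun A B hA hB => (le_inf hA hB).trans (hinf A B)⟩
  · intro h
    have key : ∀ {x y : L}, (∀ a : L, IsCoprimeElem a → a ≤ x → a ≤ y) → x ≤ y :=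
      le_of_forall_isCoprimeElem c hc_inv hc_anti
    refine ⟨top_le_iff.1 (key fun a ha _ => (h a ha).1),
      top_le_iff.1 (key fun a ha _ => (h a ha).2.1),
      fun A B => key fun a ha hle =>
        (h a ha).2.2.2 A B (hle.trans inf_le_left) (hle.trans inf_le_right),
      fun S => key fun a ha hle =>
        (h a ha).2.2.1 S fun A hA => hle.trans (iInf₂_le A hA)⟩
end

section
/- Let (X, T) be an L-fuzzy topological space and G ∈ L^X. Then G is L-fuzzy SP-compact if and only if for every family W ⊆ L^X one has ⋁_{F∈W} (T_sp*(F))' ∨ ⋁_{x∈X} ( G(x) ∧ ⋀_{F∈W} F(x) ) ≥ ⋀_{finite H ⊆ W} ⋁_{x∈X} ( G(x) ∧ ⋀_{F∈H} F(x) ). -/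
/-!
The two conditions are De Morgan duals of each other. The involution `c` exchanges arbitrary
suprema and infima (`compl_iSup_eq`, `compl_iInf_eq`), and `pcompl c` is a bijection of `X → L` onto
itself, so a family `P` corresponds to the family `W` of pointwise complements of its members,
and the finite subfamilies of `P` correspond to those of `W`. Applying `c` to the inequality for
`W` turns it into the defining inequality of SP-compactness for `P`, because
`c ((⨆ F ∈ W, c (T_sp (F'))) ⊔ ⨆ x, G x ⊓ ⨅ F ∈ W, F x)` is
`(⨅ F ∈ P, T_sp F) ⊓ ⨅ x, c (G x) ⊔ ⨆ F ∈ P, F x`, and similarly for the finite subfamilies.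
Only this duality is used; nothing about the topology or `T_sp` itself enters.
-/

/-!
Common definitions: completely distributive complete lattice `L` with an
order-reversing involution `c`, `L`-subsets `X → L`, the wayBelow relation `≪`,
coprime/prime elements, `L`-(fuzzy) topologies, closure/interior, (Semi-)Preopen
subsets, the `L`-fuzzy Preopen and Semi-Preopen operators, and the various
compactness / cover / shading / remote-family notions.
-/

variable {L : Type*} [CompletelyDistribLattice L] {X : Type*}

section Duality

theorem compl_iSup_eq {c : L → L} (hi : ∀ a, c (c a) = a) (ha : ∀ a b, a ≤ b → c b ≤ c a)
    {ι : Sort*} (f : ι → L) : c (⨆ i, f i) = ⨅ i, c (f i) := by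
  apply le_antisymm
  · exact le_iInf fun i => ha _ _ (le_iSup f i)
  · rw [← hi (⨅ i, c (f i))]
    refine ha _ _ (iSup_le fun i => ?_)
    rw [← hi (f i)]
    exact ha _ _ (iInf_le (fun i => c (f i)) i)

theorem compl_iInf_eq {c : L → L} (hi : ∀ a, c (c a) = a) (ha : ∀ a b, a ≤ b → c b ≤ c a)
    {ι : Sort*} (f : ι → L) : c (⨅ i, f i) = ⨆ i, c (f i) := by
  rw [← hi (⨆ i, c (f i)), compl_iSup_eq hi ha]
  simp only [hi]

theorem compl_sup_eq {c : L → L} (hi : ∀ a, c (c a) = a) (ha : ∀ a b, a ≤ b → c b ≤ c a)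
    (a b : L) : c (a ⊔ b) = c a ⊓ c b := by
  rw [sup_eq_iSup, compl_iSup_eq hi ha, inf_eq_iInf]
  exact iInf_congr fun i => by cases i <;> rfl

theorem compl_inf_eq {c : L → L} (hi : ∀ a, c (c a) = a) (ha : ∀ a b, a ≤ b → c b ≤ c a)
    (a b : L) : c (a ⊓ b) = c a ⊔ c b := by
  rw [← hi (c a ⊔ c b), compl_sup_eq hi ha, hi, hi]

/-- The pointwise complement as a permutation of the `L`-subsets of `X`. -/
def pcomplEquiv (c : L → L) (hi : ∀ a, c (c a) = a) : (X → L) ≃ (X → L) where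
  toFun := pcompl c
  invFun := pcompl c
  left_inv A := funext fun x => hi (A x)
  right_inv A := funext fun x => hi (A x)

/-- The SP-compactness inequality for the family `pcomplEquiv c hi ⁻¹' W` of complements of members of `W` is
the image under `c` of the inequality for `W`. -/
theorem spCompact_iff_dual {c : L → L} (hi : ∀ a, c (c a) = a)
    (ha : ∀ a b, a ≤ b → c b ≤ c a) (S : (X → L) → L) (G : X → L) (W : Set (X → L)) :
    ((⨅ F ∈ pcomplEquiv c hi ⁻¹' W, S F) ⊓
        (⨅ x : X, c (G x) ⊔ ⨆ F ∈ pcomplEquiv c hi ⁻¹' W, F x) ≤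
      ⨆ Q : Finset (X → L), ⨆ _ : ↑Q ⊆ pcomplEquiv c hi ⁻¹' W,
        ⨅ x : X, c (G x) ⊔ ⨆ F ∈ Q, F x) ↔
    (⨅ H : Finset (X → L), ⨅ _ : ↑H ⊆ W, ⨆ x : X, G x ⊓ ⨅ F ∈ H, F x) ≤
      (⨆ F ∈ W, c (S (pcompl c F))) ⊔ ⨆ x : X, G x ⊓ ⨅ F ∈ W, F x := by
  set e : (X → L) ≃ (X → L) := pcomplEquiv c hi
  have e_app : ∀ A x, e A x = c (A x) := fun _ _ => rfl
  have e_inv : ∀ A, pcompl c (e A) = A := fun A => e.left_inv A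
  have hL : c ((⨆ F ∈ W, c (S (pcompl c F))) ⊔ ⨆ x : X, G x ⊓ ⨅ F ∈ W, F x) =
      (⨅ F ∈ e ⁻¹' W, S F) ⊓ (⨅ x : X, c (G x) ⊔ ⨆ F ∈ e ⁻¹' W, F x) := by
    simp only [compl_sup_eq hi ha, compl_iSup_eq hi ha, compl_inf_eq hi ha,
      compl_iInf_eq hi ha, hi]
    congr 1
    · rw [← e.iInf_comp]
      simp only [e_inv, Set.mem_preimage]
    · refine iInf_congr fun x => ?_
      congr 1
      rw [← e.iSup_comp]
      simp only [e_app, hi, Set.mem_preimage]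
  have hR : c (⨅ H : Finset (X → L), ⨅ _ : ↑H ⊆ W, ⨆ x : X, G x ⊓ ⨅ F ∈ H, F x) =
      ⨆ Q : Finset (X → L), ⨆ _ : ↑Q ⊆ e ⁻¹' W, ⨅ x : X, c (G x) ⊔ ⨆ F ∈ Q, F x := by
    simp only [compl_iSup_eq hi ha, compl_inf_eq hi ha, compl_iInf_eq hi ha]
    rw [← e.finsetCongr.iSup_comp]
    refine iSup_congr fun Q => iSup_congr_Prop ?_ fun _ => iInf_congr fun x => ?_
    · simp [Set.image_subset_iff, Set.preimage]
    · congr 1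
      rw [← e.iSup_comp]
      simp [e_app, hi]
  rw [← hL, ← hR]
  exact ⟨fun h => by simpa only [hi] using ha _ _ h, ha _ _⟩

end Duality

theorem stmt4 (c : L → L) (hc_inv : ∀ a : L, c (c a) = a)
    (hc_anti : ∀ a b : L, a ≤ b → c b ≤ c a) (T : (X → L) → L) (hT : IsLFuzzyTopology T) (G : X → L) :
    LFuzzySPCompact c T G ↔
      ∀ W : Set (X → L),
        (⨅ H : Finset (X → L), ⨅ _ : ↑H ⊆ W, ⨆ x : X, G x ⊓ ⨅ F ∈ H, F x) ≤
          (⨆ F ∈ W, c (spOp c T (pcompl c F))) ⊔ ⨆ x : X, G x ⊓ ⨅ F ∈ W, F x := by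
  constructor
  · exact fun h W => (spCompact_iff_dual hc_inv hc_anti _ G W).1 (h _)
  · intro h P
    -- `P` is the family of complements of its own image under complementation.
    rw [← Set.preimage_image_eq P (pcomplEquiv c hc_inv).injective]
    exact (spCompact_iff_dual hc_inv hc_anti _ G _).2 (h _)
end

section
/- Let (X, T) be an L-fuzzy topological space and G ∈ L^X. Then G is L-fuzzy SP-compact if and only if for every a ∈ P(L), every strong a-shading U of G with ⋀_{F∈U} T_sp(F) ≰ a has a finite subfamily V ⊆ U which is a strong a-shading of G. -/
/-!
The theorem comes down to the fact that in a completely distributive lattice every element is the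
infimum of the primes above it: if `¬ x ≤ y`, some prime `p` satisfies `y ≤ p` and `¬ x ≤ p`
(`exists_prime_separating`). Given this, the inequality defining SP-compactness can be tested
modulo each prime `a`, and `u ⊓ v ≰ a` amounts to `u ≰ a` and `v ≰ a`, while `⨆ᵢ wᵢ ≰ a` amounts
to `wᵢ ≰ a` for some `i`; the tested inequality is then the shading condition.

For the separation, complete distributivity gives `x = ⨆ {a | a ≪ x}`
(`exists_wayBelow_not_le`), so there is a descending sequence `x = s 0 ≫ s 1 ≫ s 2 ≫ ⋯` with no
term below `y`. The up-closure of the sequence is a filter containing `x` but not `y`, and its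
complement is closed under arbitrary suprema, because `s n ≤ sSup D` puts `s (n + 1)` below an
element of `D`. So the complement is exactly the set of elements below its own supremum `p`, and
`p` is prime because the filter is closed under binary infima.
-/

/-!
Common definitions: completely distributive complete lattice `L` with an
order-reversing involution `c`, `L`-subsets `X → L`, the wayBelow relation `≪`,
coprime/prime elements, `L`-(fuzzy) topologies, closure/interior, (Semi-)Preopen
subsets, the `L`-fuzzy Preopen and Semi-Preopen operators, and the various
compactness / cover / shading / remote-family notions.
-/

variable {L : Type*} [CompletelyDistribLattice L] {X : Type*}

/-- In a completely distributive lattice, `x` is the supremum of the elements `a ≪ x`. -/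
theorem exists_wayBelow_not_le {x y : L} (h : ¬ x ≤ y) : ∃ a : L, wayBelow a x ∧ ¬ a ≤ y := by
  by_contra! hcon
  apply h
  -- The infimum of a selection `g` of one element from each `D` with `x ≤ sSup D` is `≪ x`.
  have key : (⨅ D : {D : Set L // x ≤ sSup D}, ⨆ d : D.1, (d : L)) ≤ y := by
    rw [iInf_iSup_eq]
    refine iSup_le fun g => hcon _ fun D hD => ?_
    exact ⟨g ⟨D, hD⟩, (g ⟨D, hD⟩).2, iInf_le (fun D => ((g D : D.1) : L)) ⟨D, hD⟩⟩
  refine le_trans (le_iInf fun D => ?_) key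
  rw [← sSup_eq_iSup']
  exact D.2

theorem exists_prime_separating {x y : L} (h : ¬ x ≤ y) :
    ∃ p : L, IsPrimeElem p ∧ y ≤ p ∧ ¬ x ≤ p := by
  have step : ∀ z : {z : L // ¬ z ≤ y}, ∃ w : {z : L // ¬ z ≤ y}, wayBelow w.1 z.1 := fun z =>
    let ⟨a, ha, hay⟩ := exists_wayBelow_not_le z.2
    ⟨⟨a, hay⟩, ha⟩
  choose f hf using step
  let s : ℕ → L := fun n => (f^[n] ⟨x, h⟩).1
  have hs : ∀ n, wayBelow (s (n + 1)) (s n) := fun n => by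
    simp only [s, Function.iterate_succ_apply']
    exact hf _
  have hsy : ∀ n, ¬ s n ≤ y := fun n => (f^[n] ⟨x, h⟩).2
  have hanti : Antitone s := antitone_nat_of_succ_le fun n => by
    obtain ⟨d, rfl, hd⟩ := hs n {s n} (by simp)
    exact hd
  let p : L := sSup {z : L | ∀ n, ¬ s n ≤ z}
  have hp : ∀ n, ¬ s n ≤ p := fun n hn => by
    obtain ⟨d, hd, hle⟩ := hs n _ hn
    exact hd (n + 1) hle
  have hmem : ∀ b, ¬ b ≤ p → ∃ n, s n ≤ b := fun b hb => by
    by_contra! hcon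
    exact hb (le_sSup hcon)
  refine ⟨p, ⟨fun htop => hp 0 (htop ▸ le_top), fun b d hbd => ?_⟩, le_sSup hsy, hp 0⟩
  by_contra! hcon
  obtain ⟨m, hm⟩ := hmem b hcon.1
  obtain ⟨n, hn⟩ := hmem d hcon.2
  exact hp (max m n) <| le_trans
    (le_inf ((hanti (le_max_left m n)).trans hm) ((hanti (le_max_right m n)).trans hn)) hbd

theorem stmt7 (c : L → L) (hc_inv : ∀ a : L, c (c a) = a)
    (hc_anti : ∀ a b : L, a ≤ b → c b ≤ c a) (T : (X → L) → L) (hT : IsLFuzzyTopology T) (G : X → L) :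
    LFuzzySPCompact c T G ↔
      ∀ a : L, IsPrimeElem a → ∀ U : Set (X → L), StrongShading c a G U →
        ¬ (⨅ F ∈ U, spOp c T F) ≤ a →
          ∃ V : Finset (X → L), ↑V ⊆ U ∧ StrongShading c a G ↑V := by
  constructor
  · intro hG a ha U hU hsp
    by_contra! hcon
    have hle := (hG U).trans (iSup₂_le fun V hV => not_not.mp (hcon V hV))
    exact (ha.2 _ _ hle).elim hsp hU
  · intro hshade P
    by_contra hnot
    obtain ⟨p, hp, hRp, hLp⟩ := exists_prime_separating hnot
    obtain ⟨V, hV, hVs⟩ := hshade p hp P (fun hle => hLp (inf_le_right.trans hle))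
      (fun hle => hLp (inf_le_left.trans hle))
    exact hVs (le_trans (le_iSup₂ (f := fun (Q : Finset (X → L)) (_ : ↑Q ⊆ P) =>
      ⨅ x : X, c (G x) ⊔ ⨆ F ∈ Q, F x) V hV) hRp)
end

section
/- Let (X, τ) be an L-topological space, a ∈ M(L), and G, H ∈ L^X. If G is a-fuzzy SP-compact and H is Semi-Preclosed, then G ∧ H is a-fuzzy SP-compact. -/
/-! If `U` is a `Q_a`-cover of `G ⊓ H`, then `insert H' U` is a `Q_a`-cover of `G`, because
`(G ⊓ H)' = G' ⊔ H'`. All its members are Semi-Preopen, so it has a finite subfamily that is a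
`Q_b`-cover of `G`; erasing `H'` from that subfamily leaves a finite subfamily of `U`, and what is
lost is absorbed by the `H'` in `(G ⊓ H)'`. -/

/-!
Common definitions: completely distributive complete lattice `L` with an
order-reversing involution `c`, `L`-subsets `X → L`, the wayBelow relation `≪`,
coprime/prime elements, `L`-(fuzzy) topologies, closure/interior, (Semi-)Preopen
subsets, the `L`-fuzzy Preopen and Semi-Preopen operators, and the various
compactness / cover / shading / remote-family notions.
-/

variable {L : Type*} [CompletelyDistribLattice L] {X : Type*}

/-- De Morgan's law for an order-reversing involution. -/
lemma involution_inf (c : L → L) (hc_inv : ∀ a : L, c (c a) = a)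
    (hc_anti : ∀ a b : L, a ≤ b → c b ≤ c a) (p q : L) : c (p ⊓ q) = c p ⊔ c q := by
  apply le_antisymm
  · have h : c (c p ⊔ c q) ≤ p ⊓ q :=
      le_inf (by simpa [hc_inv] using hc_anti _ _ (le_sup_left : c p ≤ c p ⊔ c q))
        (by simpa [hc_inv] using hc_anti _ _ (le_sup_right : c q ≤ c p ⊔ c q))
    simpa [hc_inv] using hc_anti _ _ h
  · exact sup_le (hc_anti _ _ inf_le_left) (hc_anti _ _ inf_le_right)

theorem stmt14 (c : L → L) (hc_inv : ∀ a : L, c (c a) = a)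
    (hc_anti : ∀ a b : L, a ≤ b → c b ≤ c a) (τ : Set (X → L)) (hτ : IsLTopology τ)
    (a : L) (ha : IsCoprimeElem a) (G H : X → L)
    (hG : AFuzzySPCompact c τ a G) (hH : IsSemiPreopen c τ (pcompl c H)) :
    AFuzzySPCompact c τ a (G ⊓ H) := by
  classical
  intro b hb U hU hcov
  obtain ⟨V, hVU, hV⟩ := hG b hb (insert (pcompl c H) U)
    (by rintro A (rfl | hA); exacts [hH, hU A hA])
    (by
      intro x
      have h := hcov x
      rw [Pi.inf_apply, involution_inf c hc_inv hc_anti, sup_assoc] at h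
      rwa [iSup_insert])
  refine ⟨V.erase (pcompl c H), ?_, ?_⟩
  · intro A hA
    rw [Finset.mem_coe, Finset.mem_erase] at hA
    exact (hVU hA.2).resolve_left hA.1
  · intro x
    rw [Pi.inf_apply, involution_inf c hc_inv hc_anti, sup_assoc]
    refine (hV x).trans (sup_le_sup_left (iSup₂_le fun A hA => ?_) _)
    by_cases hAH : A = pcompl c H
    · subst hAH
      exact le_sup_left
    · exact le_sup_of_le_right
        (le_iSup₂ (f := fun (B : X → L) (_ : B ∈ (↑(V.erase (pcompl c H)) : Set (X → L))) => B x)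
          A (Finset.mem_coe.2 (Finset.mem_erase.2 ⟨hAH, hA⟩)))
end

section
/- Let (X, T) be an L-fuzzy topological space and G, H ∈ L^X. If G is L-fuzzy SP-compact and T_sp*(H) = ⊤, then G ∧ H is L-fuzzy SP-compact. -/
/-!
The complement of `G ⊓ H` is `G' ⊔ H'`, so a family `P` covers `G ⊓ H` exactly to the degree to
which `P ∪ {H'}` covers `G`. Since `H'` is semi-preopen to degree `⊤`, adjoining it to `P` does not
lower the degree of semi-preopenness, so SP-compactness of `G` applies to `P ∪ {H'}`; a finite
subfamily of `P ∪ {H'}` becomes a finite subfamily of `P` on removing `H'`, which `G' ⊔ H'` absorbs.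
-/


/-!
Common definitions: completely distributive complete lattice `L` with an
order-reversing involution `c`, `L`-subsets `X → L`, the wayBelow relation `≪`,
coprime/prime elements, `L`-(fuzzy) topologies, closure/interior, (Semi-)Preopen
subsets, the `L`-fuzzy Preopen and Semi-Preopen operators, and the various
compactness / cover / shading / remote-family notions.
-/

variable {L : Type*} [CompletelyDistribLattice L] {X : Type*}

/-- De Morgan law for an order-reversing involution. -/
theorem compl_inf_eq_sup (c : L → L) (hc_inv : ∀ a : L, c (c a) = a)
    (hc_anti : ∀ a b : L, a ≤ b → c b ≤ c a) (a b : L) : c (a ⊓ b) = c a ⊔ c b := by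
  apply le_antisymm
  · have h : c (c a ⊔ c b) ≤ a ⊓ b := by
      refine le_inf ?_ ?_
      · simpa only [hc_inv] using hc_anti _ _ (le_sup_left : c a ≤ c a ⊔ c b)
      · simpa only [hc_inv] using hc_anti _ _ (le_sup_right : c b ≤ c a ⊔ c b)
    simpa only [hc_inv] using hc_anti _ _ h
  · exact sup_le (hc_anti _ _ inf_le_left) (hc_anti _ _ inf_le_right)

theorem stmt15 (c : L → L) (hc_inv : ∀ a : L, c (c a) = a)
    (hc_anti : ∀ a b : L, a ≤ b → c b ≤ c a) (T : (X → L) → L) (hT : IsLFuzzyTopology T) (G H : X → L)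
    (hG : LFuzzySPCompact c T G) (hH : spOp c T (pcompl c H) = ⊤) :
    LFuzzySPCompact c T (G ⊓ H) := by
  classical
  intro P
  have key := hG (insert (pcompl c H) P)
  simp only [iInf_insert, iSup_insert, hH, top_inf_eq] at key
  simp only [Pi.inf_apply, compl_inf_eq_sup c hc_inv hc_anti, sup_assoc]
  refine key.trans (iSup₂_le fun Q hQ => ?_)
  refine le_iSup₂_of_le (Q.erase (pcompl c H)) ?_ (iInf_mono fun x => ?_)
  · intro F hF
    obtain ⟨hne, hFQ⟩ := Finset.mem_erase.1 (Finset.mem_coe.1 hF)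
    exact (hQ hFQ).resolve_left hne
  · refine sup_le_sup_left (iSup₂_le fun F hF => ?_) _
    by_cases h : F = pcompl c H
    · subst h
      exact le_sup_left
    · exact le_sup_of_le_right
        (le_iSup₂_of_le (f := fun (F : X → L) _ => F x) F (Finset.mem_erase.2 ⟨h, hF⟩) le_rfl)
end

section
/- Let (X, τ) be an L-topological space, a ∈ M(L), and G, H ∈ L^X. If G and H are both a-fuzzy SP-compact, then G ∨ H is a-fuzzy SP-compact. -/
/-!
Put `s x = ⨆ A ∈ V ∪ W, A x`. The involution gives `c (G x) ⊓ c (H x) ≤ c (G x ⊔ H x)`, and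
distributivity gives `(c (G x) ⊔ s x) ⊓ (c (H x) ⊔ s x) = (c (G x) ⊓ c (H x)) ⊔ s x`. So the union
of a finite `Q_b`-cover `V` of `G` and a finite `Q_b`-cover `W` of `H` is a `Q_b`-cover of `G ⊔ H`.
Such `V` and `W` exist inside any semi-preopen `Q_a`-cover of `G ⊔ H`, because it is also a
`Q_a`-cover of the smaller `L`-subsets `G` and `H`.
-/


/-!
Common definitions: completely distributive complete lattice `L` with an
order-reversing involution `c`, `L`-subsets `X → L`, the wayBelow relation `≪`,
coprime/prime elements, `L`-(fuzzy) topologies, closure/interior, (Semi-)Preopen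
subsets, the `L`-fuzzy Preopen and Semi-Preopen operators, and the various
compactness / cover / shading / remote-family notions.
-/

variable {L : Type*} [CompletelyDistribLattice L] {X : Type*}

theorem stmt16 (c : L → L) (hc_inv : ∀ a : L, c (c a) = a)
    (hc_anti : ∀ a b : L, a ≤ b → c b ≤ c a) (τ : Set (X → L)) (hτ : IsLTopology τ)
    (a : L) (ha : IsCoprimeElem a) (G H : X → L)
    (hG : AFuzzySPCompact c τ a G) (hH : AFuzzySPCompact c τ a H) :
    AFuzzySPCompact c τ a (G ⊔ H) := by
  classical
  -- The half of De Morgan's law for `c` that the involution provides.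
  have hdm : ∀ p q : L, c p ⊓ c q ≤ c (p ⊔ q) := fun p q => by
    have hp : p ≤ c (c p ⊓ c q) := by
      simpa only [hc_inv] using hc_anti _ _ (inf_le_left : c p ⊓ c q ≤ c p)
    have hq : q ≤ c (c p ⊓ c q) := by
      simpa only [hc_inv] using hc_anti _ _ (inf_le_right : c p ⊓ c q ≤ c q)
    simpa only [hc_inv] using hc_anti _ _ (sup_le hp hq)
  intro b hb U hU hcov
  -- A cover of `G ⊔ H` covers both `G` and `H`, so each has a finite subcover.
  obtain ⟨V, hVU, hV⟩ := hG b hb U hU fun x =>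
    (hcov x).trans (sup_le_sup_right (hc_anti _ _ le_sup_left) _)
  obtain ⟨W, hWU, hW⟩ := hH b hb U hU fun x =>
    (hcov x).trans (sup_le_sup_right (hc_anti _ _ le_sup_right) _)
  refine ⟨V ∪ W, by rw [Finset.coe_union]; exact Set.union_subset hVU hWU, fun x => ?_⟩
  rw [Finset.coe_union]
  have h₁ : b ≤ c (G x) ⊔ ⨆ A ∈ (V : Set (X → L)) ∪ W, A x :=
    (hV x).trans (sup_le_sup_left (biSup_mono fun _ h => Or.inl h) _)
  have h₂ : b ≤ c (H x) ⊔ ⨆ A ∈ (V : Set (X → L)) ∪ W, A x :=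
    (hW x).trans (sup_le_sup_left (biSup_mono fun _ h => Or.inr h) _)
  -- Distributivity turns the two bounds into one with `c (G x) ⊓ c (H x)`.
  exact (le_inf h₁ h₂).trans (sup_inf_right _ _ _ |>.ge.trans
    (sup_le_sup_right (hdm (G x) (H x)) _))
end

section
/- Let (X, T) be an L-fuzzy topological space and G, H ∈ L^X. If G and H are both L-fuzzy SP-compact, then G ∨ H is L-fuzzy SP-compact. -/
/-!
For an order-reversing involution, `c (G x ⊔ H x)` is the meet `c (G x) ⊓ c (H x)`; the inequality
that uses involutivity is `inf_le_involution_sup`. As `c` is antitone, the left-hand side of the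
compactness inequality for `G ⊔ H` is below those for `G` and for `H`, hence below the meet of the
two suprema over finite subfamilies `Q₁` and `Q₂`. In a frame that meet is the supremum of the
pairwise meets, and each of these is bounded, by distributivity, by the right-hand term of `G ⊔ H`
at the finite subfamily `Q₁ ∪ Q₂`.
-/

/-!
Common definitions: completely distributive complete lattice `L` with an
order-reversing involution `c`, `L`-subsets `X → L`, the wayBelow relation `≪`,
coprime/prime elements, `L`-(fuzzy) topologies, closure/interior, (Semi-)Preopen
subsets, the `L`-fuzzy Preopen and Semi-Preopen operators, and the various
compactness / cover / shading / remote-family notions.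
-/

variable {L : Type*} [CompletelyDistribLattice L] {X : Type*}

theorem inf_le_involution_sup {M : Type*} [Lattice M] (c : M → M) (hc_inv : ∀ a : M, c (c a) = a)
    (hc_anti : ∀ a b : M, a ≤ b → c b ≤ c a) (g h : M) : c g ⊓ c h ≤ c (g ⊔ h) := by
  have hg : g ≤ c (c g ⊓ c h) := by simpa [hc_inv] using hc_anti _ _ (inf_le_left : c g ⊓ c h ≤ c g)
  have hh : h ≤ c (c g ⊓ c h) := by simpa [hc_inv] using hc_anti _ _ (inf_le_right : c g ⊓ c h ≤ c h)
  simpa [hc_inv] using hc_anti _ _ (sup_le hg hh)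

theorem stmt17 (c : L → L) (hc_inv : ∀ a : L, c (c a) = a)
    (hc_anti : ∀ a b : L, a ≤ b → c b ≤ c a) (T : (X → L) → L) (hT : IsLFuzzyTopology T) (G H : X → L)
    (hG : LFuzzySPCompact c T G) (hH : LFuzzySPCompact c T H) :
    LFuzzySPCompact c T (G ⊔ H) := by
  classical
  intro P
  have h1 : (⨅ F ∈ P, spOp c T F) ⊓ (⨅ x : X, c ((G ⊔ H) x) ⊔ ⨆ F ∈ P, F x) ≤
      ⨆ Q : Finset (X → L), ⨆ _ : ↑Q ⊆ P, ⨅ x : X, c (G x) ⊔ ⨆ F ∈ Q, F x :=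
    le_trans (inf_le_inf_left _ (iInf_mono fun x =>
      sup_le_sup_right (hc_anti _ _ le_sup_left) _)) (hG P)
  have h2 : (⨅ F ∈ P, spOp c T F) ⊓ (⨅ x : X, c ((G ⊔ H) x) ⊔ ⨆ F ∈ P, F x) ≤
      ⨆ Q : Finset (X → L), ⨆ _ : ↑Q ⊆ P, ⨅ x : X, c (H x) ⊔ ⨆ F ∈ Q, F x :=
    le_trans (inf_le_inf_left _ (iInf_mono fun x =>
      sup_le_sup_right (hc_anti _ _ le_sup_right) _)) (hH P)
  refine (le_inf h1 h2).trans ?_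
  simp only [iSup_inf_eq, inf_iSup_eq]
  refine iSup_le fun Q₁ => iSup_le fun hQ₁ => iSup_le fun Q₂ => iSup_le fun hQ₂ => ?_
  have hQ : (↑(Q₁ ∪ Q₂) : Set (X → L)) ⊆ P := by
    rw [Finset.coe_union]
    exact Set.union_subset (by assumption) (by assumption)
  refine le_trans ?_ (le_iSup₂_of_le (Q₁ ∪ Q₂) hQ le_rfl)
  refine le_iInf fun x => ?_
  have key : ∀ S ⊆ Q₁ ∪ Q₂, (⨆ F ∈ S, F x) ≤ ⨆ F ∈ Q₁ ∪ Q₂, F x := fun S hS =>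
    biSup_mono fun F hF => hS hF
  refine (inf_le_inf
    ((iInf_le _ x).trans (sup_le_sup_left (key _ (by simp)) _))
    ((iInf_le _ x).trans (sup_le_sup_left (key _ (by simp)) _))).trans ?_
  rw [← sup_inf_right]
  exact sup_le_sup_right (inf_le_involution_sup c hc_inv hc_anti (G x) (H x)) _
end

section
/- Let (X, τ₁) and (Y, τ₂) be L-topological spaces, a ∈ M(L), G ∈ L^X, and let f : X → Y be Semi-Preirresolute (i.e. f_L^←(V) = V ∘ f is Semi-Preopen in (X, τ₁) whenever V is Semi-Preopen in (Y, τ₂)). If G is a-fuzzy SP-compact in (X, τ₁), then f_L^→(G) is a-fuzzy SP-compact in (Y, τ₂), where f_L^→(G)(y) = ⋁_{x ∈ X, f(x) = y} G(x). -/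
/-!
Pulling a cover back along `f` turns a Semi-Preopen `Q_a`-cover `U` of the image `f(G)` into the
Semi-Preopen `Q_a`-cover `{A ∘ f | A ∈ U}` of `G`, and a finite subfamily of the latter lifts to a
finite subfamily of `U`. Both directions rest on `qCover_image_iff`: a family covers `f(G)` exactly
when its pullback covers `G`. This holds because the involution turns the supremum over a fibre
defining `f(G)` into an infimum, over which binary joins distribute.
-/

/-!
Common definitions: completely distributive complete lattice `L` with an
order-reversing involution `c`, `L`-subsets `X → L`, the wayBelow relation `≪`,
coprime/prime elements, `L`-(fuzzy) topologies, closure/interior, (Semi-)Preopen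
subsets, the `L`-fuzzy Preopen and Semi-Preopen operators, and the various
compactness / cover / shading / remote-family notions.
-/

variable {L : Type*} [CompletelyDistribLattice L] {X : Type*}

/-- An order-reversing involution bounds from below the complement of an indexed supremum by the
infimum of the complements. -/
theorem iInf_compl_le (c : L → L) (hc_inv : ∀ a : L, c (c a) = a)
    (hc_anti : ∀ a b : L, a ≤ b → c b ≤ c a) {ι : Sort*} (g : ι → L) :
    ⨅ i, c (g i) ≤ c (⨆ i, g i) := by
  rw [← hc_inv (⨅ i, c (g i))]
  refine hc_anti _ _ (iSup_le fun i => ?_)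
  rw [← hc_inv (g i)]
  exact hc_anti _ _ (iInf_le (fun j => c (g j)) i)

/-- A family is a `Q_b`-cover of the image of `G` under `f` iff the family of its compositions
with `f` is a `Q_b`-cover of `G`. Points outside the range of `f` impose no condition, since the
image vanishes there. -/
theorem qCover_image_iff {Y : Type*} (c : L → L) (hc_inv : ∀ a : L, c (c a) = a)
    (hc_anti : ∀ a b : L, a ≤ b → c b ≤ c a) (b : L) (G : X → L) (f : X → Y)
    (U : Set (Y → L)) :
    QCover c b (fun y => ⨆ x : X, ⨆ _ : f x = y, G x) U ↔
      QCover c b G ((fun A : Y → L => A ∘ f) '' U) := by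
  unfold QCover
  simp only [iSup_image, Function.comp_apply]
  constructor
  · intro h x
    exact (h (f x)).trans (sup_le_sup_right (hc_anti _ _ (le_iSup₂_of_le (f := fun x' (_ : f x' = f x) => G x') x rfl le_rfl)) _)
  · intro h y
    have key : ⨅ x : X, ⨅ _ : f x = y, c (G x) ≤ c (⨆ x : X, ⨆ _ : f x = y, G x) :=
      (iInf_mono fun x => iInf_compl_le c hc_inv hc_anti _).trans
        (iInf_compl_le c hc_inv hc_anti _)
    refine le_trans ?_ (sup_le_sup_right key _)
    rw [iInf₂_sup_eq]
    refine le_iInf₂ fun x hx => ?_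
    subst hx
    exact h x

theorem stmt18 {Y : Type*} (c : L → L) (hc_inv : ∀ a : L, c (c a) = a)
    (hc_anti : ∀ a b : L, a ≤ b → c b ≤ c a) (τ₁ : Set (X → L)) (hτ₁ : IsLTopology τ₁)
    (τ₂ : Set (Y → L)) (hτ₂ : IsLTopology τ₂)
    (a : L) (ha : IsCoprimeElem a) (G : X → L) (f : X → Y)
    (hf : ∀ V : Y → L, IsSemiPreopen c τ₂ V → IsSemiPreopen c τ₁ (V ∘ f))
    (hG : AFuzzySPCompact c τ₁ a G) :
    AFuzzySPCompact c τ₂ a (fun y => ⨆ x : X, ⨆ _ : f x = y, G x) := by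
  classical
  intro b hb U hU hcov
  obtain ⟨V, hVU, hV⟩ := hG b hb ((fun A : Y → L => A ∘ f) '' U)
    (by rintro _ ⟨A, hA, rfl⟩; exact hf A (hU A hA))
    ((qCover_image_iff c hc_inv hc_anti a G f U).1 hcov)
  obtain ⟨W, hWU, rfl⟩ := Finset.subset_set_image_iff.1 hVU
  refine ⟨W, hWU, (qCover_image_iff c hc_inv hc_anti b G f _).2 ?_⟩
  rwa [Finset.coe_image] at hV
end

section
/- Let (X, T) and (Y, U) be L-fuzzy topological spaces, G ∈ L^X, and let f : X → Y be L-fuzzy Semi-Preirresolute (i.e. U_sp(V) ≤ T_sp(f_L^←(V)) for every V ∈ L^Y). If G is L-fuzzy SP-compact in (X, T), then f_L^→(G) is L-fuzzy SP-compact in (Y, U), where f_L^→(G)(y) = ⋁_{x ∈ X, f(x) = y} G(x). -/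
/-!
The compactness inequality pulls back along `f`. Because the involution turns suprema into
infima and `L` satisfies the infinite distributive law `(⨅ i, a i) ⊔ b = ⨅ i, (a i ⊔ b)`,
`⨅ y, c (f→(G) y) ⊔ h y = ⨅ x, c (G x) ⊔ h (f x)` for every `h : Y → L`
(`iInf_compl_image_sup`). So the degree to which a family `P` covers `f→(G)` equals the degree
to which the preimage family `{F ∘ f | F ∈ P}` covers `G`; irresoluteness of `f` says that the
Semi-Preopen degrees do not decrease under preimage, compactness of `G` applies to the preimage
family, and every finite subfamily of it is the preimage of a finite subfamily of `P`.
-/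

/-!
Common definitions: completely distributive complete lattice `L` with an
order-reversing involution `c`, `L`-subsets `X → L`, the wayBelow relation `≪`,
coprime/prime elements, `L`-(fuzzy) topologies, closure/interior, (Semi-)Preopen
subsets, the `L`-fuzzy Preopen and Semi-Preopen operators, and the various
compactness / cover / shading / remote-family notions.
-/

variable {L : Type*} [CompletelyDistribLattice L] {X : Type*}

theorem involution_iSup {c : L → L} (hc_inv : ∀ a : L, c (c a) = a)
    (hc_anti : ∀ a b : L, a ≤ b → c b ≤ c a) {ι : Sort*} (g : ι → L) :
    c (⨆ i, g i) = ⨅ i, c (g i) := by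
  apply le_antisymm
  · exact le_iInf fun i => hc_anti _ _ (le_iSup g i)
  · rw [← hc_inv (⨅ i, c (g i))]
    refine hc_anti _ _ (iSup_le fun i => ?_)
    rw [← hc_inv (g i)]
    exact hc_anti _ _ (iInf_le (fun i => c (g i)) i)

/-- The degree to which `h` covers the image of `G` under `f` is the degree to which `h ∘ f`
covers `G`. Points of `Y` outside the range of `f` contribute `c ⊥ = ⊤`. -/
theorem iInf_compl_image_sup {Y : Type*} {c : L → L} (hc_inv : ∀ a : L, c (c a) = a)
    (hc_anti : ∀ a b : L, a ≤ b → c b ≤ c a) (G : X → L) (f : X → Y) (h : Y → L) :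
    (⨅ y : Y, c (⨆ x : X, ⨆ _ : f x = y, G x) ⊔ h y) = ⨅ x : X, c (G x) ⊔ h (f x) := by
  simp only [involution_iSup hc_inv hc_anti, iInf_sup_eq]
  rw [iInf_comm]
  simp only [iInf_iInf_eq_right]

theorem stmt19 {Y : Type*} (c : L → L) (hc_inv : ∀ a : L, c (c a) = a)
    (hc_anti : ∀ a b : L, a ≤ b → c b ≤ c a) (T : (X → L) → L) (hT : IsLFuzzyTopology T)
    (U : (Y → L) → L) (hU : IsLFuzzyTopology U)
    (G : X → L) (f : X → Y)
    (hf : ∀ V : Y → L, spOp c U V ≤ spOp c T (V ∘ f))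
    (hG : LFuzzySPCompact c T G) :
    LFuzzySPCompact c U (fun y => ⨆ x : X, ⨆ _ : f x = y, G x) := by
  classical
  intro P
  simp only [iInf_compl_image_sup hc_inv hc_anti G f]
  have key := hG ((fun F : Y → L => F ∘ f) '' P)
  simp only [iInf_image, iSup_image, Function.comp_apply] at key
  refine (inf_le_inf_right _ (iInf₂_mono fun F _ => hf F)).trans (key.trans ?_)
  refine iSup₂_le fun Q hQ => ?_
  obtain ⟨Q', hQ', rfl⟩ := Finset.subset_set_image_iff.1 hQ
  refine le_iSup₂_of_le Q' hQ' ?_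
  simp only [Finset.iSup_finset_image, Function.comp_apply, le_refl]
end
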